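/- Let C = ⟨(b|0), (ℓ | fh + 2f)⟩ be a Z_2Z_4-additive cyclic code of type (α, β; γ, δ; κ) with fhg = x^β - 1, β odd. Then γ = α - deg(b) + deg(h), δ = deg(g), and κ = α - deg(gcd(ℓg, b)). -/

import Mathlib

open Polynomial

/-- Reduction modulo 2, `Z₄[x] → Z₂[x]`. -/
noncomputable def red42 : Polynomial (ZMod 4) →+* Polynomial (ZMod 2) :=
  Polynomial.mapRingHom (ZMod.castHom (show 2 ∣ 4 by norm_num) (ZMod 2))

/-- The polynomial `∑ uᵢ xⁱ` associated to a binary vector. -/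
noncomputable def polyOf2 {α : ℕ} (u : Fin α → ZMod 2) : Polynomial (ZMod 2) :=
  ∑ i, C (u i) * X ^ (i : ℕ)

/-- The polynomial `∑ u'ⱼ xʲ` associated to a quaternary vector. -/
noncomputable def polyOf4 {β : ℕ} (u : Fin β → ZMod 4) : Polynomial (ZMod 4) :=
  ∑ j, C (u j) * X ^ (j : ℕ)

/-- Membership in the `Z₂Z₄`-additive cyclic code `C = ⟨(b|0), (ℓ|fh+2f)⟩`. -/
def memC {α β : ℕ} (b ℓ : Polynomial (ZMod 2)) (q : Polynomial (ZMod 4))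
    (z : (Fin α → ZMod 2) × (Fin β → ZMod 4)) : Prop :=
  ∃ lam mu : Polynomial (ZMod 4),
    (X ^ α - 1 : Polynomial (ZMod 2)) ∣
        polyOf2 z.1 - (red42 lam * b + red42 mu * ℓ) ∧
    (X ^ β - 1 : Polynomial (ZMod 4)) ∣ polyOf4 z.2 - mu * q

/-!
Write `q = fh + 2f`, so that `2q = 2fh`, and let bars denote reduction modulo 2. The type of a group
isomorphic to `Z₂^γ × Z₄^δ` is determined by the orders `2 ^ δ` of its double and `2 ^ (γ + δ)` of
its 2-torsion. A codeword `(lam b + mu ℓ | mu q)` is killed by 2 exactly when `ḡ ∣ mū`, that is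
`mu = g k + 2 c`. Hence the double of `C` has `|Z₂[x]/(ḡ)|` elements, and the 2-torsion consists of
the words `(lam b + k ḡ ℓ | 2 f (g k + h c))`. Since `h̄` and `ḡ` are coprime (`x^β - 1` is
separable for odd `β`), its quaternary part is the cyclic code `(2f)`, with `2 ^ (deg g + deg h)`
elements, and the words with zero quaternary part form the binary cyclic code `(b)`. The binary part
of the 2-torsion is the cyclic code `(b, ℓ ḡ)`, generated by the gcd.
-/

section CountingInGroups

variable {G H K : Type*} [AddGroup G] [AddGroup H] [AddGroup K]

theorem card_map_mul_card_inf_ker (Γ : AddSubgroup G) (φ : G →+ H) :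
    Nat.card (Γ.map φ) * Nat.card (Γ ⊓ φ.ker : AddSubgroup G) = Nat.card Γ := by
  rw [← AddSubgroup.relIndex_ker, ← AddSubgroup.inf_relIndex_left, mul_comm,
    ← AddSubgroup.relIndex_bot_left, ← AddSubgroup.relIndex_bot_left (H := Γ)]
  exact AddSubgroup.relIndex_mul_relIndex _ _ _ bot_le inf_le_left

theorem card_range_eq_card_of_ker_eq {φ : G →+ H} {ψ : G →+ K} (hψ : Function.Surjective ψ)
    (hker : ∀ x, φ x = 0 ↔ ψ x = 0) : Nat.card φ.range = Nat.card K := by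
  have hker' : φ.ker = ψ.ker := AddSubgroup.ext hker
  rw [← AddSubgroup.index_ker, hker', AddSubgroup.index_ker, AddMonoidHom.range_eq_top.2 hψ,
    AddSubgroup.card_top]

end CountingInGroups

theorem finrank_span_addSubgroup {p d : ℕ} [Fact p.Prime] {M : Type*} [AddCommGroup M]
    [Module (ZMod p) M] {Γ : AddSubgroup M} (hΓ : Nat.card Γ = p ^ d) :
    Module.finrank (ZMod p) (Submodule.span (ZMod p) (Γ : Set M)) = d := by
  have hfin : Finite (AddSubgroup.toZModSubmodule p Γ) :=
    Nat.finite_of_card_ne_zero (hΓ.trans_ne (pow_ne_zero d (NeZero.ne p)))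
  rw [← AddSubgroup.coe_toZModSubmodule p Γ, Submodule.span_eq]
  have hcard := Module.natCard_eq_pow_finrank (K := ZMod p) (V := AddSubgroup.toZModSubmodule p Γ)
  rw [Nat.card_zmod] at hcard
  exact Nat.pow_right_injective (Fact.out : p.Prime).two_le (hcard.symm.trans hΓ)

theorem zmod_four_two_mul_eq_zero_iff (x : ZMod 4) :
    2 * x = 0 ↔ ZMod.castHom (show 2 ∣ 4 by norm_num) (ZMod 2) x = 0 := by
  revert x
  decide

theorem two_nsmul_prod_eq_zero_iff {ι κ : Type*} (t : (ι → ZMod 2) × (κ → ZMod 4)) :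
    2 • t = 0 ↔ ∀ j, ZMod.castHom (show 2 ∣ 4 by norm_num) (ZMod 2) (t.2 j) = 0 := by
  have hbinary : (2 • t).1 = 0 := ZModModule.char_nsmul_eq_zero 2 t.1
  have hquaternary (j : κ) : (2 • t).2 j = 2 * t.2 j := by
    rw [Prod.smul_snd, Pi.smul_apply, nsmul_eq_mul, Nat.cast_ofNat]
  simp only [← zmod_four_two_mul_eq_zero_iff, ← hquaternary]
  exact Prod.ext_iff.trans ((and_iff_right hbinary).trans funext_iff)

section TwoTorsion

variable {G : Type*} [AddCommGroup G]

/-- The elements of order at most two of `Γ`; for a code `Γ = C` this is the subcode `C_b`. -/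
def twoTorsion (Γ : AddSubgroup G) : AddSubgroup G :=
  Γ ⊓ (nsmulAddMonoidHom 2).ker

theorem mem_twoTorsion {Γ : AddSubgroup G} {x : G} :
    x ∈ twoTorsion Γ ↔ x ∈ Γ ∧ x + x = 0 := by
  rw [← two_nsmul]
  rfl

theorem card_map_double_of_addEquiv {Γ : AddSubgroup G} {γ δ : ℕ}
    (e : Γ ≃+ (Fin γ → ZMod 2) × (Fin δ → ZMod 4)) :
    Nat.card (Γ.map (nsmulAddMonoidHom 2)) = 2 ^ δ := by
  have hred : Function.Surjective (ZMod.castHom (show 2 ∣ 4 by norm_num) (ZMod 2)) :=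
    ZMod.castHom_surjective _
  let reduce : Γ →+ (Fin δ → ZMod 2) :=
    (((ZMod.castHom (show 2 ∣ 4 by norm_num) (ZMod 2)).toAddMonoidHom.compLeft (Fin δ)).comp
      (AddMonoidHom.snd _ _)).comp e.toAddMonoidHom
  have hsurj : Function.Surjective reduce :=
    (hred.comp_left.comp Prod.snd_surjective).comp e.surjective
  have hker (x : Γ) : (nsmulAddMonoidHom 2).comp Γ.subtype x = 0 ↔ reduce x = 0 := by
    have hdouble : (nsmulAddMonoidHom 2).comp Γ.subtype x = 0 ↔ e (2 • x) = 0 := by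
      rw [EmbeddingLike.map_eq_zero_iff (f := e), ← Subtype.coe_inj]
      rfl
    rw [hdouble, map_nsmul, two_nsmul_prod_eq_zero_iff]
    exact funext_iff.symm
  have hcard := card_range_eq_card_of_ker_eq hsurj hker
  rwa [AddMonoidHom.range_comp, AddSubgroup.range_subtype, Nat.card_fun, Nat.card_zmod,
    Nat.card_fin] at hcard

theorem type_eq_of_card {Γ : AddSubgroup G} {γ δ m n : ℕ}
    (e : Γ ≃+ (Fin γ → ZMod 2) × (Fin δ → ZMod 4))
    (hdouble : Nat.card (Γ.map (nsmulAddMonoidHom 2)) = 2 ^ n)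
    (htorsion : Nat.card (twoTorsion Γ) = 2 ^ m) : δ = n ∧ γ + δ = m := by
  have hδ : δ = n :=
    Nat.pow_right_injective le_rfl ((card_map_double_of_addEquiv e).symm.trans hdouble)
  have hcard : Nat.card Γ = 2 ^ (γ + 2 * δ) := by
    rw [Nat.card_congr e.toEquiv]
    simp [pow_add, pow_mul]
  have hsplit : Nat.card (Γ.map (nsmulAddMonoidHom 2)) * Nat.card (twoTorsion Γ) = Nat.card Γ :=
    card_map_mul_card_inf_ker Γ (nsmulAddMonoidHom 2)
  rw [hdouble, htorsion, hcard, ← pow_add] at hsplit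
  have hexp := Nat.pow_right_injective le_rfl hsplit
  omega

end TwoTorsion

section CyclicCodes

variable {R : Type*} [CommRing R] {n : ℕ}

/-- The word of length `n` representing a polynomial modulo `x ^ n - 1`. -/
noncomputable def cyclicVec (R : Type*) [CommRing R] (n : ℕ) : R[X] →+ (Fin n → R) where
  toFun p i := (p %ₘ (X ^ n - 1)).coeff i
  map_zero' := by ext; simp
  map_add' p q := by ext; simp [add_modByMonic]

theorem monic_X_pow_sub_one (hn : n ≠ 0) : (X ^ n - 1 : R[X]).Monic := by
  simpa using monic_X_pow_sub_C (1 : R) hn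

theorem degree_X_pow_sub_one [Nontrivial R] (hn : n ≠ 0) : (X ^ n - 1 : R[X]).degree = n := by
  simpa using degree_X_pow_sub_C (Nat.pos_of_ne_zero hn) (1 : R)

theorem cyclicVec_eq_zero_iff (hn : n ≠ 0) {p : R[X]} :
    cyclicVec R n p = 0 ↔ X ^ n - 1 ∣ p := by
  nontriviality R
  rw [← modByMonic_eq_zero_iff_dvd (monic_X_pow_sub_one hn)]
  refine ⟨fun hp => ?_, fun hp => funext fun i => by simp [cyclicVec, hp]⟩
  ext m
  rcases lt_or_ge m n with hm | hm
  · exact congrFun hp ⟨m, hm⟩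
  · have hdeg := degree_modByMonic_lt p (monic_X_pow_sub_one hn)
    rw [degree_X_pow_sub_one hn] at hdeg
    exact coeff_eq_zero_of_degree_lt (hdeg.trans_le (by exact_mod_cast hm))

theorem cyclicVec_sum_C_mul_X_pow (hn : n ≠ 0) (u : Fin n → R) :
    cyclicVec R n (∑ i, C (u i) * X ^ (i : ℕ)) = u := by
  nontriviality R
  have hdeg : (∑ i, C (u i) * X ^ (i : ℕ)).degree < (X ^ n - 1 : R[X]).degree := by
    rw [degree_X_pow_sub_one hn]
    exact degree_sum_fin_lt u
  funext i
  simp only [cyclicVec, AddMonoidHom.coe_mk, ZeroHom.coe_mk,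
    (modByMonic_eq_self_iff (monic_X_pow_sub_one hn)).2 hdeg, finsetSum_coeff, coeff_C_mul_X_pow]
  simp [Fin.val_inj]

theorem X_pow_sub_one_dvd_sum_sub_iff (hn : n ≠ 0) (u : Fin n → R) (p : R[X]) :
    X ^ n - 1 ∣ ∑ i, C (u i) * X ^ (i : ℕ) - p ↔ cyclicVec R n p = u := by
  rw [← cyclicVec_eq_zero_iff hn, map_sub, cyclicVec_sum_C_mul_X_pow hn, sub_eq_zero, eq_comm]

/-- The cyclic code of length `n` generated by `a`: the words representing the multiples of `a`
modulo `x ^ n - 1`. -/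
noncomputable def cyclicCode (n : ℕ) (a : R[X]) : AddSubgroup (Fin n → R) :=
  ((cyclicVec R n).comp (AddMonoidHom.mulRight a)).range

theorem mem_cyclicCode {a : R[X]} {u : Fin n → R} :
    u ∈ cyclicCode n a ↔ ∃ p, cyclicVec R n (p * a) = u :=
  Iff.rfl

theorem card_adjoinRoot {K : Type*} [Field K] {B : K[X]} (hB : B ≠ 0) :
    Nat.card (AdjoinRoot B) = Nat.card K ^ B.natDegree := by
  rw [Nat.card_congr (AdjoinRoot.powerBasis hB).basis.equivFun.toEquiv, Nat.card_fun, Nat.card_fin,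
    AdjoinRoot.powerBasis_dim]

theorem card_cyclicCode {K : Type*} [Field K] (hn : n ≠ 0) {a : K[X]} (ha : a ∣ X ^ n - 1) :
    Nat.card (cyclicCode n a) = Nat.card K ^ (n - a.natDegree) := by
  obtain ⟨B, hB⟩ := ha
  have haB : a * B ≠ 0 := hB ▸ (monic_X_pow_sub_one hn).ne_zero
  have ha0 := left_ne_zero_of_mul haB
  have hdeg : B.natDegree = n - a.natDegree := by
    have := natDegree_mul ha0 (right_ne_zero_of_mul haB)
    rw [← hB, natDegree_eq_of_degree_eq_some (degree_X_pow_sub_one hn)] at this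
    omega
  rw [← hdeg, ← card_adjoinRoot (right_ne_zero_of_mul haB)]
  refine card_range_eq_card_of_ker_eq (ψ := (AdjoinRoot.mk B).toAddMonoidHom)
    AdjoinRoot.mk_surjective fun p => ?_
  change cyclicVec K n (p * a) = 0 ↔ AdjoinRoot.mk B p = 0
  rw [cyclicVec_eq_zero_iff hn, AdjoinRoot.mk_eq_zero, hB, mul_comm p, mul_dvd_mul_iff_left ha0]

end CyclicCodes

section ReductionModTwo

instance nontrivial_zmod_four : Nontrivial (ZMod 4) :=
  ZMod.nontrivial_iff.2 (by norm_num)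

theorem red42_surjective : Function.Surjective red42 :=
  map_surjective _ (ZMod.castHom_surjective _)

theorem red42_two : red42 2 = 0 := by
  rw [map_ofNat]
  exact CharTwo.two_eq_zero

theorem monic_red42 {p : (ZMod 4)[X]} (hp : p.Monic) : (red42 p).Monic :=
  hp.map _

theorem natDegree_red42 {p : (ZMod 4)[X]} (hp : p.Monic) : (red42 p).natDegree = p.natDegree :=
  hp.natDegree_map _

theorem four_eq_zero : (4 : (ZMod 4)[X]) = 0 :=
  CharP.ofNat_eq_zero (ZMod 4)[X] 4

theorem red42_eq_zero_iff_two_dvd {p : (ZMod 4)[X]} : red42 p = 0 ↔ 2 ∣ p := by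
  have hcoeff (x : ZMod 4) : ZMod.castHom (show 2 ∣ 4 by norm_num) (ZMod 2) x = 0 ↔ 2 ∣ x := by
    revert x
    decide
  rw [← C_ofNat, C_dvd_iff_dvd_coeff]
  simp [red42, Polynomial.ext_iff, ← hcoeff]

theorem two_mul_eq_zero_iff_red42 {p : (ZMod 4)[X]} : 2 * p = 0 ↔ red42 p = 0 := by
  rw [← C_ofNat]
  simp [red42, Polynomial.ext_iff, zmod_four_two_mul_eq_zero_iff]

theorem red42_dvd_red42_iff {p a : (ZMod 4)[X]} :
    red42 p ∣ red42 a ↔ ∃ k c, a = p * k + 2 * c := by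
  constructor
  · rintro ⟨k, hk⟩
    obtain ⟨k, rfl⟩ := red42_surjective k
    obtain ⟨c, hc⟩ : 2 ∣ a - p * k := by
      rw [← red42_eq_zero_iff_two_dvd, map_sub, map_mul, hk, sub_self]
    exact ⟨k, c, by rw [← hc]; ring⟩
  · rintro ⟨k, c, rfl⟩
    simp [red42_two]

theorem dvd_two_mul_iff_red42 {p a : (ZMod 4)[X]} (hp : p.Monic) :
    p ∣ 2 * a ↔ red42 p ∣ red42 a := by
  rw [red42_dvd_red42_iff]
  constructor
  · rintro ⟨k, hk⟩
    have hk0 : red42 k = 0 := by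
      have : red42 p * red42 k = 0 := by rw [← map_mul, ← hk, map_mul, red42_two, zero_mul]
      exact (mul_eq_zero.1 this).resolve_left (monic_red42 hp).ne_zero
    obtain ⟨k, rfl⟩ := red42_eq_zero_iff_two_dvd.1 hk0
    obtain ⟨c, hc⟩ : 2 ∣ a - p * k := by
      rw [← red42_eq_zero_iff_two_dvd, ← two_mul_eq_zero_iff_red42]
      linear_combination hk
    exact ⟨k, c, by rw [← hc]; ring⟩
  · rintro ⟨k, c, rfl⟩
    exact ⟨2 * k, by linear_combination c * four_eq_zero⟩

theorem card_cyclicCode_two_mul {n : ℕ} (hn : n ≠ 0) {f : (ZMod 4)[X]} (hf : f.Monic)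
    (hfn : f ∣ X ^ n - 1) : Nat.card (cyclicCode n (2 * f)) = 2 ^ (n - f.natDegree) := by
  obtain ⟨B, hB⟩ := hfn
  have hBmonic : B.Monic := hf.of_mul_monic_left (hB ▸ monic_X_pow_sub_one hn)
  have hdeg : (red42 B).natDegree = n - f.natDegree := by
    have := hf.natDegree_mul hBmonic
    rw [← hB, natDegree_eq_of_degree_eq_some (degree_X_pow_sub_one hn)] at this
    rw [natDegree_red42 hBmonic]
    omega
  have hcard : Nat.card (AdjoinRoot (red42 B)) = 2 ^ (n - f.natDegree) := by
    rw [card_adjoinRoot (monic_red42 hBmonic).ne_zero, Nat.card_zmod, hdeg]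
  rw [← hcard]
  refine card_range_eq_card_of_ker_eq (ψ := ((AdjoinRoot.mk (red42 B)).comp red42).toAddMonoidHom)
    (AdjoinRoot.mk_surjective.comp red42_surjective) fun p => ?_
  change cyclicVec (ZMod 4) n (p * (2 * f)) = 0 ↔ AdjoinRoot.mk (red42 B) (red42 p) = 0
  rw [cyclicVec_eq_zero_iff hn, AdjoinRoot.mk_eq_zero, hB, ← dvd_two_mul_iff_red42 hBmonic,
    show p * (2 * f) = f * (2 * p) by ring, hf.isRegular.left.dvd_cancel_left]

theorem isCoprime_red42_of_mul_eq_X_pow_sub_one {n : ℕ} (hn : Odd n) {f g h : (ZMod 4)[X]}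
    (hfac : f * h * g = X ^ n - 1) : IsCoprime (red42 h) (red42 g) := by
  have hsep : (X ^ n - 1 : (ZMod 2)[X]).Separable :=
    X_pow_sub_one_separable_iff.2 (by rw [(ZMod.natCast_eq_one_iff_odd).2 hn]; exact one_ne_zero)
  have hred : red42 f * red42 h * red42 g = X ^ n - 1 := by
    rw [← map_mul, ← map_mul, hfac]
    simp [red42]
  rw [← hred] at hsep
  exact hsep.isCoprime.of_mul_left_right

end ReductionModTwo

section AdditiveCyclicCode

variable {α β : ℕ} {b ℓ : (ZMod 2)[X]} {f g h q : (ZMod 4)[X]}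

/-- The word `lam (b | 0) + mu (ℓ | q)` attached to the pair of coefficients `(lam, mu)`. -/
noncomputable def encode (α β : ℕ) (b ℓ : (ZMod 2)[X]) (q : (ZMod 4)[X]) :
    (ZMod 4)[X] × (ZMod 4)[X] →+ (Fin α → ZMod 2) × (Fin β → ZMod 4) where
  toFun x := (cyclicVec _ α (red42 x.1 * b + red42 x.2 * ℓ), cyclicVec _ β (x.2 * q))
  map_zero' := by simp
  map_add' x y := by
    simp only [Prod.fst_add, Prod.snd_add, map_add, add_mul, Prod.mk_add_mk]
    abel_nf

/-- The `Z₂Z₄`-additive cyclic code `⟨(b | 0), (ℓ | q)⟩` as an additive group of words. -/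
noncomputable def additiveCyclicCode (α β : ℕ) (b ℓ : (ZMod 2)[X]) (q : (ZMod 4)[X]) :
    AddSubgroup ((Fin α → ZMod 2) × (Fin β → ZMod 4)) :=
  (encode α β b ℓ q).range

theorem mem_additiveCyclicCode_iff_memC (hα : α ≠ 0) (hβ : β ≠ 0)
    {z : (Fin α → ZMod 2) × (Fin β → ZMod 4)} :
    z ∈ additiveCyclicCode α β b ℓ q ↔ memC b ℓ q z := by
  simp only [memC, polyOf2, polyOf4, X_pow_sub_one_dvd_sum_sub_iff hα,
    X_pow_sub_one_dvd_sum_sub_iff hβ]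
  simp [additiveCyclicCode, encode, Prod.ext_iff]

theorem two_nsmul_encode_eq_zero_iff (hβ : β ≠ 0) (hf : f.Monic) (hg : g.Monic) (hh : h.Monic)
    (hfac : f * h * g = X ^ β - 1) (lam mu : (ZMod 4)[X]) :
    2 • encode α β b ℓ (f * h + 2 * f) (lam, mu) = 0 ↔ red42 g ∣ red42 mu := by
  have hbinary (u : Fin α → ZMod 2) : 2 • u = 0 := ZModModule.char_nsmul_eq_zero 2 u
  have hdouble : 2 • (mu * (f * h + 2 * f)) = f * h * (2 * mu) := by
    rw [two_nsmul]
    linear_combination mu * f * four_eq_zero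
  rw [Prod.ext_iff, ← dvd_two_mul_iff_red42 hg,
    ← (hf.mul hh).isRegular.left.dvd_cancel_left, hfac, ← hdouble, ← cyclicVec_eq_zero_iff hβ,
    map_nsmul]
  simp [encode, hbinary]

theorem card_map_double_additiveCyclicCode (hβ : β ≠ 0) (hf : f.Monic) (hg : g.Monic)
    (hh : h.Monic) (hfac : f * h * g = X ^ β - 1) :
    Nat.card ((additiveCyclicCode α β b ℓ (f * h + 2 * f)).map (nsmulAddMonoidHom 2)) =
      2 ^ g.natDegree := by
  have hcard : Nat.card (AdjoinRoot (red42 g)) = 2 ^ g.natDegree := by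
    rw [card_adjoinRoot (monic_red42 hg).ne_zero, Nat.card_zmod, natDegree_red42 hg]
  rw [additiveCyclicCode, AddMonoidHom.map_range, ← hcard]
  refine card_range_eq_card_of_ker_eq
    (ψ := ((AdjoinRoot.mk (red42 g)).comp red42).toAddMonoidHom.comp (AddMonoidHom.snd _ _))
    ((AdjoinRoot.mk_surjective.comp red42_surjective).comp Prod.snd_surjective) fun x => ?_
  exact (two_nsmul_encode_eq_zero_iff hβ hf hg hh hfac x.1 x.2).trans AdjoinRoot.mk_eq_zero.symm

theorem mem_twoTorsion_additiveCyclicCode (hβ : β ≠ 0) (hf : f.Monic) (hg : g.Monic)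
    (hh : h.Monic) (hfac : f * h * g = X ^ β - 1) {z : (Fin α → ZMod 2) × (Fin β → ZMod 4)} :
    z ∈ twoTorsion (additiveCyclicCode α β b ℓ (f * h + 2 * f)) ↔ ∃ lam k c,
      (cyclicVec _ α (red42 lam * b + red42 k * (ℓ * red42 g)),
        cyclicVec _ β ((g * k + h * c) * (2 * f))) = z := by
  have hencode (lam k c) : encode α β b ℓ (f * h + 2 * f) (lam, g * k + 2 * c) =
      (cyclicVec _ α (red42 lam * b + red42 k * (ℓ * red42 g)),
        cyclicVec _ β ((g * k + h * c) * (2 * f))) := by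
    have hquaternary : cyclicVec _ β ((g * k + 2 * c) * (f * h + 2 * f)) =
        cyclicVec _ β ((g * k + h * c) * (2 * f)) := by
      rw [← sub_eq_zero, ← map_sub, cyclicVec_eq_zero_iff hβ, ← hfac]
      exact ⟨k, by linear_combination c * f * four_eq_zero⟩
    refine Prod.ext (congrArg (cyclicVec _ α) ?_) hquaternary
    simp only [map_add, map_mul, red42_two]
    ring
  rw [mem_twoTorsion, ← two_nsmul]
  constructor
  · rintro ⟨⟨⟨lam, mu⟩, rfl⟩, hz⟩
    obtain ⟨k, c, rfl⟩ :=
      red42_dvd_red42_iff.1 ((two_nsmul_encode_eq_zero_iff hβ hf hg hh hfac lam mu).1 hz)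
    exact ⟨lam, k, c, (hencode lam k c).symm⟩
  · rintro ⟨lam, k, c, rfl⟩
    rw [← hencode]
    refine ⟨⟨_, rfl⟩, (two_nsmul_encode_eq_zero_iff hβ hf hg hh hfac _ _).2 ?_⟩
    exact red42_dvd_red42_iff.2 ⟨k, c, rfl⟩

theorem map_fst_twoTorsion_additiveCyclicCode (hβ : β ≠ 0) (hf : f.Monic) (hg : g.Monic)
    (hh : h.Monic) (hfac : f * h * g = X ^ β - 1) :
    (twoTorsion (additiveCyclicCode α β b ℓ (f * h + 2 * f))).map (AddMonoidHom.fst _ _) =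
      cyclicCode α (EuclideanDomain.gcd (ℓ * red42 g) b) := by
  ext w
  simp only [AddSubgroup.mem_map, mem_twoTorsion_additiveCyclicCode hβ hf hg hh hfac,
    mem_cyclicCode]
  constructor
  · rintro ⟨_, ⟨lam, k, c, rfl⟩, rfl⟩
    obtain ⟨p, hp⟩ : EuclideanDomain.gcd (ℓ * red42 g) b ∣
        red42 lam * b + red42 k * (ℓ * red42 g) :=
      dvd_add (dvd_mul_of_dvd_right (EuclideanDomain.gcd_dvd_right _ _) _)
        (dvd_mul_of_dvd_right (EuclideanDomain.gcd_dvd_left _ _) _)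
    exact ⟨p, by rw [mul_comm, ← hp]; rfl⟩
  · rintro ⟨p, rfl⟩
    obtain ⟨lam, hlam⟩ := red42_surjective (p * EuclideanDomain.gcdB (ℓ * red42 g) b)
    obtain ⟨k, hk⟩ := red42_surjective (p * EuclideanDomain.gcdA (ℓ * red42 g) b)
    refine ⟨_, ⟨lam, k, 0, rfl⟩, congrArg (cyclicVec _ α) ?_⟩
    rw [hlam, hk, EuclideanDomain.gcd_eq_gcd_ab]
    ring

theorem map_snd_twoTorsion_additiveCyclicCode (hβ : Odd β) (hf : f.Monic) (hg : g.Monic)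
    (hh : h.Monic) (hfac : f * h * g = X ^ β - 1) :
    (twoTorsion (additiveCyclicCode α β b ℓ (f * h + 2 * f))).map (AddMonoidHom.snd _ _) =
      cyclicCode β (2 * f) := by
  ext w
  simp only [AddSubgroup.mem_map, mem_twoTorsion_additiveCyclicCode hβ.pos.ne' hf hg hh hfac,
    mem_cyclicCode]
  constructor
  · rintro ⟨_, ⟨lam, k, c, rfl⟩, rfl⟩
    exact ⟨_, rfl⟩
  · rintro ⟨p, rfl⟩
    obtain ⟨u, v, huv⟩ := isCoprime_red42_of_mul_eq_X_pow_sub_one hβ hfac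
    obtain ⟨u, rfl⟩ := red42_surjective u
    obtain ⟨v, rfl⟩ := red42_surjective v
    have hbezout : 2 * (g * v + h * u - 1) = 0 := by
      rw [two_mul_eq_zero_iff_red42]
      simp only [map_sub, map_add, map_mul, map_one]
      linear_combination huv
    refine ⟨_, ⟨0, v * p, u * p, rfl⟩, congrArg (cyclicVec _ β) ?_⟩
    linear_combination f * p * hbezout

theorem twoTorsion_additiveCyclicCode_inf_ker_snd (hβ : Odd β) (hf : f.Monic) (hg : g.Monic)
    (hh : h.Monic) (hfac : f * h * g = X ^ β - 1) (hdvd : b ∣ red42 (h * g) * ℓ) :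
    twoTorsion (additiveCyclicCode α β b ℓ (f * h + 2 * f)) ⊓ (AddMonoidHom.snd _ _).ker =
      (cyclicCode α b).map (AddMonoidHom.inl _ _) := by
  ext z
  simp only [AddSubgroup.mem_inf, mem_twoTorsion_additiveCyclicCode hβ.pos.ne' hf hg hh hfac,
    AddSubgroup.mem_map, mem_cyclicCode, AddMonoidHom.mem_ker]
  constructor
  · rintro ⟨⟨lam, k, c, rfl⟩, hz⟩
    have hhg : red42 (h * g) ∣ red42 (g * k + h * c) := by
      rw [← dvd_two_mul_iff_red42 (hh.mul hg), ← hf.isRegular.left.dvd_cancel_left, ← mul_assoc,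
        hfac, ← mul_assoc, mul_comm f, mul_assoc, ← cyclicVec_eq_zero_iff hβ.pos.ne']
      exact (congrArg (cyclicVec _ β) (by ring)).trans hz
    have hk : red42 h ∣ red42 k := by
      refine (isCoprime_red42_of_mul_eq_X_pow_sub_one hβ hfac).dvd_of_dvd_mul_left ?_
      rw [map_mul, map_add, map_mul, map_mul] at hhg
      exact (dvd_add_left (dvd_mul_right _ _)).1 ((dvd_mul_right _ _).trans hhg)
    have hb : b ∣ red42 lam * b + red42 k * (ℓ * red42 g) := by
      refine dvd_add (dvd_mul_left b _) (hdvd.trans ?_)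
      rw [map_mul, mul_comm ℓ, ← mul_assoc]
      exact mul_dvd_mul_right (mul_dvd_mul_right hk _) _
    obtain ⟨p, hp⟩ := hb
    exact ⟨_, ⟨p, rfl⟩, Prod.ext (by rw [hp, mul_comm b]; rfl) hz.symm⟩
  · rintro ⟨_, ⟨p, rfl⟩, rfl⟩
    obtain ⟨lam, rfl⟩ := red42_surjective p
    exact ⟨⟨lam, 0, 0, by simp⟩, rfl⟩

theorem card_twoTorsion_additiveCyclicCode (hα : α ≠ 0) (hβ : Odd β) (hf : f.Monic)
    (hg : g.Monic) (hh : h.Monic) (hfac : f * h * g = X ^ β - 1) (hb : b ∣ X ^ α - 1)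
    (hdvd : b ∣ red42 (h * g) * ℓ) :
    Nat.card (twoTorsion (additiveCyclicCode α β b ℓ (f * h + 2 * f))) =
      2 ^ (α - b.natDegree + h.natDegree + g.natDegree) := by
  have hdeg : β - f.natDegree = h.natDegree + g.natDegree := by
    have := congrArg natDegree hfac
    rw [(hf.mul hh).natDegree_mul hg, hf.natDegree_mul hh,
      natDegree_eq_of_degree_eq_some (degree_X_pow_sub_one hβ.pos.ne')] at this
    omega
  have hfβ : f ∣ X ^ β - 1 := ⟨h * g, by rw [← hfac, mul_assoc]⟩
  have hinl : Function.Injective (AddMonoidHom.inl (Fin α → ZMod 2) (Fin β → ZMod 4)) :=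
    fun _ _ huv => congrArg Prod.fst huv
  rw [← card_map_mul_card_inf_ker _ (AddMonoidHom.snd _ _),
    map_snd_twoTorsion_additiveCyclicCode hβ hf hg hh hfac,
    twoTorsion_additiveCyclicCode_inf_ker_snd hβ hf hg hh hfac hdvd,
    card_cyclicCode_two_mul hβ.pos.ne' hf hfβ, AddSubgroup.card_map_of_injective hinl,
    card_cyclicCode hα hb, Nat.card_zmod, hdeg, ← pow_add]
  congr 1
  ring

end AdditiveCyclicCode

theorem type_from_degrees_general (α β γ δ κ : ℕ) (hα : 0 < α) (hβ : Odd β)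
    (f g h : Polynomial (ZMod 4)) (hf : f.Monic) (hg : g.Monic) (hh : h.Monic)
    (hfac : f * h * g = X ^ β - 1)
    (b ℓ : Polynomial (ZMod 2)) (hb : b ∣ X ^ α - 1)
    (hdvd : b ∣ red42 (h * g) * ℓ)
    (e : {z : (Fin α → ZMod 2) × (Fin β → ZMod 4) //
        memC b ℓ (f * h + 2 * f) z} ≃ (Fin γ → ZMod 2) × (Fin δ → ZMod 4))
    (he : ∀ z w (hz : memC b ℓ (f * h + 2 * f) z)
        (hw : memC b ℓ (f * h + 2 * f) w)
        (hzw : memC b ℓ (f * h + 2 * f) (z + w)),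
        e ⟨z + w, hzw⟩ = e ⟨z, hz⟩ + e ⟨w, hw⟩)
    (hκ : κ = Module.finrank (ZMod 2) (Submodule.span (ZMod 2)
        {w : Fin α → ZMod 2 | ∃ z : (Fin α → ZMod 2) × (Fin β → ZMod 4),
          memC b ℓ (f * h + 2 * f) z ∧ z + z = 0 ∧ z.1 = w})) :
    γ = α - b.natDegree + h.natDegree ∧ δ = g.natDegree ∧
      κ = α - (EuclideanDomain.gcd (ℓ * red42 g) b).natDegree := by
  have hα' := hα.ne'
  have hβ' := hβ.pos.ne'
  have hmem {z} : z ∈ additiveCyclicCode α β b ℓ (f * h + 2 * f) ↔ memC b ℓ (f * h + 2 * f) z :=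
    mem_additiveCyclicCode_iff_memC hα' hβ'
  let e' : additiveCyclicCode α β b ℓ (f * h + 2 * f) ≃+ (Fin γ → ZMod 2) × (Fin δ → ZMod 4) :=
    AddEquiv.mk' ((Equiv.subtypeEquivRight fun _ => hmem).trans e) fun x y =>
      he x y (hmem.1 x.2) (hmem.1 y.2) (hmem.1 (x + y).2)
  obtain ⟨hδ, hγδ⟩ := type_eq_of_card e'
    (card_map_double_additiveCyclicCode hβ' hf hg hh hfac)
    (card_twoTorsion_additiveCyclicCode hα' hβ hf hg hh hfac hb hdvd)
  refine ⟨by omega, hδ, ?_⟩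
  have hset : {w : Fin α → ZMod 2 | ∃ z : (Fin α → ZMod 2) × (Fin β → ZMod 4),
      memC b ℓ (f * h + 2 * f) z ∧ z + z = 0 ∧ z.1 = w} =
      cyclicCode α (EuclideanDomain.gcd (ℓ * red42 g) b) := by
    rw [← map_fst_twoTorsion_additiveCyclicCode hβ' hf hg hh hfac]
    ext w
    simp [mem_twoTorsion, hmem, and_assoc]
  rw [hκ, hset]
  refine finrank_span_addSubgroup ?_
  rw [card_cyclicCode hα' ((EuclideanDomain.gcd_dvd_right _ _).trans hb), Nat.card_zmod]

/-- If `C = ⟨(b|0), (ℓ|fh+2f)⟩` is of type `(α,β;γ,δ;κ)` then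
`γ = α - deg b + deg h`, `δ = deg g` and `κ = α - deg gcd(ℓg, b)`.
The type hypothesis says: `C` is additively equivalent to
`Z₂^γ × Z₄^δ`, and `κ` is the dimension of the binary projection of the
order-two subcode `C_b`. -/
theorem type_from_degrees (α β γ δ κ : ℕ) (hα : 0 < α) (hβ : Odd β)
    (f g h : Polynomial (ZMod 4)) (hf : f.Monic) (hg : g.Monic) (hh : h.Monic)
    (hfac : f * h * g = X ^ β - 1)
    (b ℓ : Polynomial (ZMod 2)) (hb : b ∣ X ^ α - 1) (hℓ : ℓ.degree < b.degree)
    (hdvd : b ∣ red42 (h * g) * ℓ)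
    (e : {z : (Fin α → ZMod 2) × (Fin β → ZMod 4) //
        memC b ℓ (f * h + 2 * f) z} ≃ (Fin γ → ZMod 2) × (Fin δ → ZMod 4))
    (he : ∀ z w (hz : memC b ℓ (f * h + 2 * f) z)
        (hw : memC b ℓ (f * h + 2 * f) w)
        (hzw : memC b ℓ (f * h + 2 * f) (z + w)),
        e ⟨z + w, hzw⟩ = e ⟨z, hz⟩ + e ⟨w, hw⟩)
    (hκ : κ = Module.finrank (ZMod 2) (Submodule.span (ZMod 2)
        {w : Fin α → ZMod 2 | ∃ z : (Fin α → ZMod 2) × (Fin β → ZMod 4),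
          memC b ℓ (f * h + 2 * f) z ∧ z + z = 0 ∧ z.1 = w})) :
    γ = α - b.natDegree + h.natDegree ∧ δ = g.natDegree ∧
      κ = α - (EuclideanDomain.gcd (ℓ * red42 g) b).natDegree :=
  type_from_degrees_general α β γ δ κ hα hβ f g h hf hg hh hfac b ℓ hb hdvd e he hκ
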